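/- Let S¹ = N(σ¹_0,…,σ¹_{m₁}) be a Nikishin system on intervals Δ¹_0,…,Δ¹_{m₁}, let a_0,…,a_{m₁} be arbitrary polynomials, and define the linear forms A_j(z) = Σ_{k=j}^{m₁} a_k(z) ŝ¹_{j+1,k}(z) for j = 0,…,m₁ (ŝ¹_{j+1,j} ≡ 1, so A_{m₁} = a_{m₁}, and ŝ¹_{j+1,k} is the Cauchy transform of s¹_{j+1,k} = ⟨σ¹_{j+1},…,σ¹_k⟩). Then for each j = 0,…,m₁ and every z ∈ ℂ∖(Δ¹_{j+1} ∪ … ∪ Δ¹_{m₁}): a_j(z) = A_j(z) + Σ_{k=j+1}^{m₁} (−1)^{k−j} ⟨σ¹_k,σ¹_{k−1},…,σ¹_{j+1}⟩^(z) · A_k(z), where μ̂ and ⟨…⟩^ denote Cauchy transforms (the sum is empty for j = m₁). -/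

import Mathlib

open MeasureTheory Polynomial Set Filter

noncomputable section

/-- The support of a Borel measure on `ℝ`: points all of whose open neighborhoods
have positive measure. -/
def msupport (μ : Measure ℝ) : Set ℝ :=
  {x : ℝ | ∀ U : Set ℝ, IsOpen U → x ∈ U → μ U ≠ 0}

/-- The copy of a real set inside `ℂ`. -/
def cpx (s : Set ℝ) : Set ℂ := (fun x : ℝ => (x : ℂ)) '' s

/-- `nikhat μ e j g` is the Cauchy transform of the measure `⟨σ_j, …, σ_{j+g}⟩`,
where `σ_i = (e i) • (μ i)` is a measure of constant sign. -/
def nikhat (μ : ℕ → Measure ℝ) (e : ℕ → ℝ) : ℕ → ℕ → ℂ → ℂ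
  | j, 0, z => (e j : ℂ) * ∫ t, 1 / (z - (t : ℂ)) ∂(μ j)
  | j, g + 1, z => (e j : ℂ) * ∫ t, nikhat μ e (j + 1) g (t : ℂ) / (z - (t : ℂ)) ∂(μ j)

/-- The Cauchy transform `ŝ_{j+1,k}` of `s_{j+1,k} = ⟨σ_{j+1},…,σ_k⟩`, with the
convention that it is `≡ 1` when `k ≤ j`. -/
def wt (μ : ℕ → Measure ℝ) (e : ℕ → ℝ) (j k : ℕ) (z : ℂ) : ℂ :=
  if j < k then nikhat μ e (j + 1) (k - (j + 1)) z else 1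

/-- Integral of `f` against the measure `s_{j,k} = ⟨σ_j, …, σ_k⟩`
(whose density with respect to `σ_j` is `ŝ_{j+1,k}`). -/
def sInt (μ : ℕ → Measure ℝ) (e : ℕ → ℝ) (j k : ℕ) (f : ℝ → ℂ) : ℂ :=
  (e j : ℂ) * ∫ x, f x * wt μ e j k (x : ℂ) ∂(μ j)

/-- The linear form `𝒜_{n,j}(z) = ∑_{k=j}^{m₁} a_k(z) ŝ¹_{j+1,k}(z)`. -/
def linForm (μ : ℕ → Measure ℝ) (e : ℕ → ℝ) (m₁ j : ℕ) (A : ℕ → Polynomial ℝ)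
    (z : ℂ) : ℂ :=
  ∑ k ∈ Finset.Icc j m₁, Polynomial.aeval z (A k) * wt μ e j k z

/-- The linear forms with negative index:
`𝒜_{n,-j-1}(z) = ∫ 𝒜_{n,-j}(x) dσ²_j(x) / (z - x)`. -/
def linFormNeg (μ : ℕ → Measure ℝ) (e : ℕ → ℝ) (F : ℂ → ℂ) : ℕ → ℂ → ℂ
  | 0 => F
  | j + 1 => fun z => (e j : ℂ) * ∫ x, linFormNeg μ e F j (x : ℂ) / (z - (x : ℂ)) ∂(μ j)

/-- A Nikishin system `N(σ_0,…,σ_m)` of measures of constant sign `σ_j = (e j) • (μ j)`,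
with `Co(supp σ_j) = Δ_j = [a j, b j]` and `Δ_j ∩ Δ_{j+1} = ∅`. -/
structure NikSys (m : ℕ) where
  μ : ℕ → Measure ℝ
  e : ℕ → ℝ
  a : ℕ → ℝ
  b : ℕ → ℝ
  fin : ∀ j, IsFiniteMeasure (μ j)
  sgn : ∀ j, e j = 1 ∨ e j = -1
  hull : ∀ j ≤ m, convexHull ℝ (msupport (μ j)) = Set.Icc (a j) (b j)
  inf : ∀ j ≤ m, (msupport (μ j)).Infinite
  disj : ∀ j < m, Set.Icc (a j) (b j) ∩ Set.Icc (a (j + 1)) (b (j + 1)) = ∅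

/-- Decreasing multi-index (the class `ℤ₊^{m+1}(•)`). -/
def Decr (m : ℕ) (n : ℕ → ℕ) : Prop := ∀ j < m, n (j + 1) ≤ n j

/-- `|n| = n_0 + ⋯ + n_m`. -/
def msum (m : ℕ) (n : ℕ → ℕ) : ℕ := ∑ j ∈ Finset.range (m + 1), n j

/-- `N_{1,j} = n_j + ⋯ + n_m` (partial tail sums). -/
def tailSum (m : ℕ) (n : ℕ → ℕ) (j : ℕ) : ℕ := ∑ k ∈ Finset.Icc j m, n k

/-- Mixed type multiple orthogonal polynomials relative to `(n1;n2)` and `(S1,S2)`. -/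
def IsMOP (m₁ m₂ : ℕ) (S1 : NikSys m₁) (S2 : NikSys m₂)
    (n1 n2 : ℕ → ℕ) (A : ℕ → Polynomial ℝ) : Prop :=
  (∀ j ≤ m₁, (A j).degree < (n1 j : WithBot ℕ)) ∧
  (∃ j ≤ m₁, A j ≠ 0) ∧
  ∀ k ≤ m₂, ∀ ν < n2 k,
    sInt S2.μ S2.e 0 k (fun x => (x : ℂ) ^ ν * linForm S1.μ S1.e m₁ 0 A (x : ℂ)) = 0

/-- The "monic" normalization: the last entry different from zero has leading
coefficient `1`. -/
def MonicLast (m₁ : ℕ) (A : ℕ → Polynomial ℝ) : Prop :=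
  ∃ j ≤ m₁, (A j).Monic ∧ ∀ k, j < k → k ≤ m₁ → A k = 0

/-- `n^l`: increase the `l`-th component by one. -/
def bump (l : ℕ) (n : ℕ → ℕ) : ℕ → ℕ := fun j => if j = l then n j + 1 else n j


/-- Cauchy transform of the measure `⟨σ_{i_1}, …, σ_{i_r}⟩` given by the list of
(positive part, sign) pairs; the empty list gives the constant `1` (the density of
the innermost measure). -/
def listHat : List (Measure ℝ × ℝ) → ℂ → ℂ
  | [], _ => 1
  | (p :: rest), z => (p.2 : ℂ) * ∫ t, listHat rest (t : ℂ) / (z - (t : ℂ)) ∂p.1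

/-- The chain `σ_i, σ_{i+1}, …, σ_k` (increasing indices). -/
def chain (μ : ℕ → Measure ℝ) (e : ℕ → ℝ) (i k : ℕ) : List (Measure ℝ × ℝ) :=
  (List.range' i (k + 1 - i)).map fun t => (μ t, e t)

/-- The chain `σ_k, σ_{k-1}, …, σ_i` (decreasing indices). -/
def rchain (μ : ℕ → Measure ℝ) (e : ℕ → ℝ) (i k : ℕ) : List (Measure ℝ × ℝ) :=
  (chain μ e i k).reverse

/-- The linear form `𝒜_j(z) = ∑_{k=j}^{m₁} a_k(z) ŝ¹_{j+1,k}(z)` (list version). -/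
def linFormL (μ : ℕ → Measure ℝ) (e : ℕ → ℝ) (m₁ j : ℕ) (A : ℕ → Polynomial ℝ)
    (z : ℂ) : ℂ :=
  ∑ k ∈ Finset.Icc j m₁, Polynomial.aeval z (A k) *
    (if j < k then listHat (chain μ e (j + 1) k) z else 1)

/-! Writing `1 / ((z - x) (z - y))` in partial fractions gives the product formula
`σ̂ τ̂ = ⟨σ, τ⟩^ + ⟨τ, σ⟩^` for Cauchy transforms, also with densities in front of `σ` and `τ`.
Applied to every product of a decreasing and an increasing transform it makes the alternating sum
`∑_l (-1)^(l-j) ⟨σ_l, …, σ_{j+1}⟩^ ⟨σ_{l+1}, …, σ_k⟩^`, `j ≤ l ≤ k`, telescope to `0` when `j < k`.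
Hence the unitriangular matrix of increasing transforms, which turns the `a_k` into the `𝒜_k`, is
inverted by the matrix of signed decreasing transforms. -/

/-- The Cauchy transform of the complex measure `f dμ`. -/
def cauchyTransform (μ : Measure ℝ) (f : ℝ → ℂ) (z : ℂ) : ℂ :=
  ∫ t, f t / (z - t) ∂μ

lemma exists_norm_inv_sub_le_of_areSeparated {𝕜 : Type*} [NormedDivisionRing 𝕜] {s t : Set 𝕜}
    (hst : Metric.AreSeparated s t) : ∃ C : ℝ, ∀ x ∈ s, ∀ y ∈ t, ‖(x - y)⁻¹‖ ≤ C := by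
  obtain ⟨r, hr, hrst⟩ := hst
  refine ⟨(r⁻¹).toReal, fun x hx y hy => ?_⟩
  rw [norm_inv, ENNReal.toReal_inv, ← dist_eq_norm, dist_edist]
  have hr_top : r ≠ ⊤ := ne_top_of_le_ne_top (edist_ne_top x y) (hrst x hx y hy)
  exact inv_anti₀ (ENNReal.toReal_pos hr hr_top)
    (ENNReal.toReal_mono (edist_ne_top x y) (hrst x hx y hy))

lemma areSeparated_of_isCompact_of_isClosed {X : Type*} [PseudoEMetricSpace X] {s t : Set X}
    (hs : IsCompact s) (ht : IsClosed t) (hst : Disjoint s t) : Metric.AreSeparated s t := by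
  obtain ⟨r, hr, h⟩ := Metric.exists_pos_forall_lt_edist hs ht hst
  exact ⟨r, by exact_mod_cast hr.ne', fun x hx y hy => (h x hx y hy).le⟩

lemma div_sub_mul_div_sub {K : Type*} [Field K] (a b : K) {x y z : K} (hzx : z ≠ x) (hzy : z ≠ y)
    (hxy : x ≠ y) :
    a / (z - x) * (b / (z - y)) = a * b / (x - y) / (z - x) + a * b / (y - x) / (z - y) := by
  rw [← sub_ne_zero] at hzx hzy hxy
  rw [← neg_sub x y]
  field_simp
  ring

section CauchyKernel

variable {μ ν : Measure ℝ} {f g : ℝ → ℂ}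

lemma exists_ae_norm_inv_sub_le {z : ℂ} (hz : z ∉ cpx μ.support) :
    ∃ C : ℝ, ∀ᵐ x : ℝ ∂μ, ‖(z - x)⁻¹‖ ≤ C := by
  have hclosed : IsClosed (cpx μ.support) :=
    Complex.isometry_ofReal.isClosedEmbedding.isClosedMap _ Measure.isClosed_support
  obtain ⟨C, hC⟩ := exists_norm_inv_sub_le_of_areSeparated <|
    areSeparated_of_isCompact_of_isClosed isCompact_singleton hclosed
      (disjoint_singleton_left.mpr hz)
  refine ⟨C, ?_⟩
  filter_upwards [Measure.support_mem_ae] with x hx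
  exact hC z rfl x ⟨x, hx, rfl⟩

lemma ae_prod_mem_support [SFinite ν] :
    ∀ᵐ p ∂μ.prod ν, p.1 ∈ μ.support ∧ p.2 ∈ ν.support :=
  (Measure.quasiMeasurePreserving_fst.ae Measure.support_mem_ae).and
    (Measure.quasiMeasurePreserving_snd.ae Measure.support_mem_ae)

lemma integrable_prod_mul_div_sub [SFinite ν] (hf : Integrable f μ) (hg : Integrable g ν)
    (hμν : Metric.AreSeparated μ.support ν.support) :
    Integrable (fun p : ℝ × ℝ => f p.1 * g p.2 / ((p.1 : ℂ) - p.2)) (μ.prod ν) := by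
  obtain ⟨C, hC⟩ := exists_norm_inv_sub_le_of_areSeparated hμν
  simp only [div_eq_mul_inv]
  refine (hf.mul_prod hg).mul_bdd (c := C) (by fun_prop) ?_
  filter_upwards [ae_prod_mem_support] with p hp
  simpa only [← Complex.ofReal_sub, ← Complex.ofReal_inv, Complex.norm_real]
    using hC p.1 hp.1 p.2 hp.2

lemma integrable_prod_mul_div_sub_div [SFinite ν] (hf : Integrable f μ) (hg : Integrable g ν)
    (hμν : Metric.AreSeparated μ.support ν.support) {z : ℂ} (hz : z ∉ cpx μ.support) :
    Integrable (fun p : ℝ × ℝ => f p.1 * g p.2 / ((p.1 : ℂ) - p.2) / (z - p.1)) (μ.prod ν) := by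
  obtain ⟨C, hC⟩ := exists_ae_norm_inv_sub_le hz
  simp only [div_eq_mul_inv _ (z - _)]
  exact (integrable_prod_mul_div_sub hf hg hμν).mul_bdd (by fun_prop)
    (Measure.quasiMeasurePreserving_fst.ae hC)

lemma integrable_cauchyTransform [IsFiniteMeasure μ] [SFinite ν] (hg : Integrable g ν)
    (hμν : Metric.AreSeparated μ.support ν.support) :
    Integrable (fun x : ℝ => cauchyTransform ν g x) μ := by
  simpa only [cauchyTransform, one_mul] using
    (integrable_prod_mul_div_sub (integrable_const 1) hg hμν).integral_prod_left

lemma cauchyTransform_mul_cauchyTransform [SFinite μ] [SFinite ν]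
    (hf : Integrable f μ) (hg : Integrable g ν) (hμν : Metric.AreSeparated μ.support ν.support)
    {z : ℂ} (hzμ : z ∉ cpx μ.support) (hzν : z ∉ cpx ν.support) :
    cauchyTransform μ f z * cauchyTransform ν g z =
      cauchyTransform μ (fun x => f x * cauchyTransform ν g x) z +
        cauchyTransform ν (fun y => cauchyTransform μ f y * g y) z := by
  have h_fst := integrable_prod_mul_div_sub_div hf hg hμν hzμ
  have h_snd : Integrable (fun p : ℝ × ℝ => f p.1 * g p.2 / ((p.2 : ℂ) - p.1) / (z - p.2))
      (μ.prod ν) := by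
    simp only [mul_comm (f _)]
    exact (integrable_prod_mul_div_sub_div hg hf hμν.symm hzν).swap
  have h_partial_fractions : ∀ᵐ p ∂μ.prod ν, f p.1 / (z - p.1) * (g p.2 / (z - p.2)) =
      f p.1 * g p.2 / ((p.1 : ℂ) - p.2) / (z - p.1) +
        f p.1 * g p.2 / ((p.2 : ℂ) - p.1) / (z - p.2) := by
    filter_upwards [ae_prod_mem_support] with p hp
    exact div_sub_mul_div_sub (f p.1) (g p.2) (fun h => hzμ ⟨p.1, hp.1, h.symm⟩)
      (fun h => hzν ⟨p.2, hp.2, h.symm⟩)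
      (Complex.ofReal_injective.ne (hμν.disjoint.ne_of_mem hp.1 hp.2))
  calc cauchyTransform μ f z * cauchyTransform ν g z
    _ = ∫ p : ℝ × ℝ, f p.1 / (z - p.1) * (g p.2 / (z - p.2)) ∂μ.prod ν :=
        (integral_prod_mul _ _).symm
    _ = (∫ x, ∫ y, f x * g y / ((x : ℂ) - y) / (z - x) ∂ν ∂μ) +
          ∫ y, ∫ x, f x * g y / ((y : ℂ) - x) / (z - y) ∂μ ∂ν := by
        rw [integral_congr_ae h_partial_fractions, integral_add h_fst h_snd,
          integral_prod _ h_fst, integral_prod_symm _ h_snd]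
    _ = _ := by
        congr 1
        · simp only [cauchyTransform, mul_div_assoc, integral_div, integral_const_mul]
        · simp only [cauchyTransform, mul_div_right_comm (f _), integral_div, integral_mul_const]

end CauchyKernel

/-- A list of (positive part, sign) pairs of finite measures in which neighbours have supports at
positive distance. This is the property of the chains of a Nikishin system that makes their iterated
Cauchy transforms integrable. -/
def IsSeparatedChain (L : List (Measure ℝ × ℝ)) : Prop :=
  (∀ p ∈ L, IsFiniteMeasure p.1) ∧
    L.IsChain fun p q => Metric.AreSeparated p.1.support q.1.support

namespace IsSeparatedChain

variable {p q : Measure ℝ × ℝ} {L : List (Measure ℝ × ℝ)}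

lemma tail (h : IsSeparatedChain (p :: L)) : IsSeparatedChain L :=
  ⟨fun r hr => h.1 r (List.mem_cons_of_mem p hr), h.2.tail⟩

lemma isFiniteMeasure_head (h : IsSeparatedChain (p :: L)) : IsFiniteMeasure p.1 :=
  h.1 p List.mem_cons_self

lemma areSeparated (h : IsSeparatedChain (p :: q :: L)) :
    Metric.AreSeparated p.1.support q.1.support :=
  (List.isChain_cons_cons.mp h.2).1

lemma cons (hL : IsSeparatedChain (q :: L)) (hp : IsFiniteMeasure p.1)
    (hpq : Metric.AreSeparated p.1.support q.1.support) : IsSeparatedChain (p :: q :: L) :=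
  ⟨List.forall_mem_cons.mpr ⟨hp, hL.1⟩, List.isChain_cons_cons.mpr ⟨hpq, hL.2⟩⟩

end IsSeparatedChain

lemma listHat_cons (p : Measure ℝ × ℝ) (L : List (Measure ℝ × ℝ)) (z : ℂ) :
    listHat (p :: L) z = p.2 * cauchyTransform p.1 (fun t => listHat L t) z := rfl

lemma integrable_listHat {p : Measure ℝ × ℝ} {L : List (Measure ℝ × ℝ)}
    (h : IsSeparatedChain (p :: L)) : Integrable (fun t : ℝ => listHat L t) p.1 := by
  induction L generalizing p with
  | nil =>
    have := h.isFiniteMeasure_head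
    exact integrable_const 1
  | cons q L ih =>
    have := h.isFiniteMeasure_head
    have := h.tail.isFiniteMeasure_head
    exact (integrable_cauchyTransform (ih h.tail) h.areSeparated).const_mul _

lemma listHat_cons_mul_listHat_cons {p q : Measure ℝ × ℝ} {R L : List (Measure ℝ × ℝ)}
    (hR : IsSeparatedChain (p :: R)) (hL : IsSeparatedChain (p :: q :: L)) {z : ℂ}
    (hzp : z ∉ cpx p.1.support) (hzq : z ∉ cpx q.1.support) :
    listHat (p :: R) z * listHat (q :: L) z =
      p.2 * cauchyTransform p.1 (fun t => listHat R t * listHat (q :: L) t) z +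
        q.2 * cauchyTransform q.1 (fun t => listHat (p :: R) t * listHat L t) z := by
  have := hL.isFiniteMeasure_head
  have := hL.tail.isFiniteMeasure_head
  have h_mul := cauchyTransform_mul_cauchyTransform (integrable_listHat hR)
    (integrable_listHat hL.tail) hL.areSeparated hzp hzq
  have h_smul (μ : Measure ℝ) (c : ℂ) (f : ℝ → ℂ) :
      cauchyTransform μ (fun t => c * f t) z = c * cauchyTransform μ f z := by
    simp only [cauchyTransform, mul_div_assoc, integral_const_mul]
  simp only [listHat_cons, mul_left_comm _ (q.2 : ℂ), mul_assoc (p.2 : ℂ), h_smul]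
  linear_combination (p.2 * q.2 : ℂ) * h_mul

-- The accumulator `R` lets the induction move the head of `L` across the split.
lemma sum_listHat_reverse_take_append_mul_listHat_drop {p : Measure ℝ × ℝ}
    {R L : List (Measure ℝ × ℝ)} (hR : IsSeparatedChain (p :: R)) (hL : IsSeparatedChain (p :: L))
    {z : ℂ} (hz : ∀ q ∈ p :: L, z ∉ cpx q.1.support) :
    ∑ i ∈ Finset.range (L.length + 1),
        (-1) ^ i * (listHat ((L.take i).reverse ++ p :: R) z * listHat (L.drop i) z) =
      p.2 * cauchyTransform p.1 (fun t => listHat R t * listHat L t) z := by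
  induction L generalizing p R with
  | nil => simp [listHat, cauchyTransform]
  | cons q L ih =>
    obtain ⟨hzp, hzL⟩ := List.forall_mem_cons.mp hz
    have h_rest := ih (hR.cons hL.tail.isFiniteMeasure_head hL.areSeparated.symm) hL.tail hzL
    have h_head := listHat_cons_mul_listHat_cons hR hL hzp (hzL q List.mem_cons_self)
    rw [List.length_cons, Finset.sum_range_succ']
    simp only [List.take_succ_cons, List.reverse_cons, List.append_assoc, List.singleton_append,
      List.drop_succ_cons, pow_succ', mul_assoc, ← Finset.mul_sum, h_rest, List.take_zero,
      List.reverse_nil, List.nil_append, List.drop_zero, pow_zero, h_head]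
    ring

theorem sum_listHat_reverse_take_mul_listHat_drop_eq_zero {L : List (Measure ℝ × ℝ)}
    (hne : L ≠ []) (hL : IsSeparatedChain L) {z : ℂ} (hz : ∀ q ∈ L, z ∉ cpx q.1.support) :
    ∑ i ∈ Finset.range (L.length + 1),
      (-1) ^ i * (listHat (L.take i).reverse z * listHat (L.drop i) z) = 0 := by
  obtain ⟨p, L, rfl⟩ := List.exists_cons_of_ne_nil hne
  have h_rest := sum_listHat_reverse_take_append_mul_listHat_drop (R := [])
    ⟨by simpa using hL.isFiniteMeasure_head, .singleton p⟩ hL hz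
  rw [List.length_cons, Finset.sum_range_succ']
  simp only [List.take_succ_cons, List.reverse_cons, List.drop_succ_cons, pow_succ', mul_assoc,
    ← Finset.mul_sum, h_rest, List.take_zero, List.reverse_nil, List.drop_zero, pow_zero,
    listHat, listHat_cons, one_mul]
  ring

lemma sum_Icc_mul_sum_Icc_mul_eq {ι R : Type*} [PartialOrder ι] [LocallyFiniteOrder ι]
    [CommSemiring R] {j m : ι} (hjm : j ≤ m) {u c : ι → R} {w : ι → ι → R} (hone : u j * w j j = 1)
    (hzero : ∀ k, j < k → k ≤ m → ∑ l ∈ Finset.Icc j k, u l * w l k = 0) :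
    ∑ l ∈ Finset.Icc j m, u l * ∑ k ∈ Finset.Icc l m, c k * w l k = c j := by
  calc ∑ l ∈ Finset.Icc j m, u l * ∑ k ∈ Finset.Icc l m, c k * w l k
    _ = ∑ k ∈ Finset.Icc j m, ∑ l ∈ Finset.Icc j k, u l * (c k * w l k) := by
        simp only [Finset.mul_sum]
        refine Finset.sum_comm' fun l k => ?_
        simp only [Finset.mem_Icc]
        exact ⟨fun h => ⟨⟨h.1.1, h.2.1⟩, h.1.1.trans h.2.1, h.2.2⟩,
          fun h => ⟨⟨h.1.1, h.1.2.trans h.2.2⟩, h.1.2, h.2.2⟩⟩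
    _ = ∑ k ∈ Finset.Icc j m, c k * ∑ l ∈ Finset.Icc j k, u l * w l k := by
        simp only [Finset.mul_sum, mul_left_comm]
    _ = c j * ∑ l ∈ Finset.Icc j j, u l * w l j := by
        refine Finset.sum_eq_single_of_mem j (Finset.left_mem_Icc.mpr hjm) fun k hk hkj => ?_
        obtain ⟨hjk, hkm⟩ := Finset.mem_Icc.mp hk
        rw [hzero k (hjk.lt_of_ne' hkj) hkm, mul_zero]
    _ = c j := by rw [Finset.Icc_self, Finset.sum_singleton, hone, mul_one]

section Chain

variable {μ : ℕ → Measure ℝ} {e : ℕ → ℝ} {i j k m : ℕ}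

lemma chain_succ_self : chain μ e (k + 1) k = [] := by
  simp [chain]

lemma rchain_succ_self : rchain μ e (k + 1) k = [] := by
  simp [rchain, chain_succ_self]

lemma length_chain : (chain μ e i k).length = k + 1 - i := by
  simp [chain]

lemma drop_chain (n : ℕ) : (chain μ e i k).drop n = chain μ e (i + n) k := by
  simp [chain, List.drop_range', Nat.sub_sub, ← List.map_drop]

lemma take_chain_succ {n : ℕ} (hn : j + n ≤ k) :
    (chain μ e (j + 1) k).take n = chain μ e (j + 1) (j + n) := by
  rw [chain, ← List.map_take, List.take_range'_of_length_ge (by omega), chain]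
  congr 2
  omega

lemma forall_mem_chain {P : Measure ℝ × ℝ → Prop} :
    (∀ p ∈ chain μ e i k, P p) ↔ ∀ t, i ≤ t → t ≤ k → P (μ t, e t) := by
  simp only [chain, List.forall_mem_map, List.mem_range'_1]
  exact forall_congr' fun t => ⟨fun h hi hk => h ⟨hi, by omega⟩, fun h ht => h ht.1 (by omega)⟩

lemma isSeparatedChain_chain (hfin : ∀ t, i ≤ t → t ≤ k → IsFiniteMeasure (μ t))
    (hsep : ∀ t, i ≤ t → t < k → Metric.AreSeparated (μ t).support (μ (t + 1)).support) :
    IsSeparatedChain (chain μ e i k) := by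
  refine ⟨forall_mem_chain.mpr hfin, (List.isChain_map _).mpr ?_⟩
  refine (List.isChain_range' i (k + 1 - i) 1).imp_of_mem_imp ?_
  rintro t _ ht hs rfl
  rw [List.mem_range'_1] at ht hs
  exact hsep t ht.1 (by omega)

theorem sum_listHat_rchain_mul_listHat_chain_eq_zero (hjk : j < k)
    (hfin : ∀ t, j < t → t ≤ k → IsFiniteMeasure (μ t))
    (hsep : ∀ t, j < t → t < k → Metric.AreSeparated (μ t).support (μ (t + 1)).support)
    {z : ℂ} (hz : ∀ t, j < t → t ≤ k → z ∉ cpx (μ t).support) :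
    ∑ l ∈ Finset.Icc j k,
      (-1) ^ (l - j) * listHat (rchain μ e (j + 1) l) z * listHat (chain μ e (l + 1) k) z = 0 := by
  have hne : chain μ e (j + 1) k ≠ [] := List.ne_nil_of_length_pos (by rw [length_chain]; omega)
  rw [← sum_listHat_reverse_take_mul_listHat_drop_eq_zero hne (isSeparatedChain_chain hfin hsep)
    (forall_mem_chain.mpr hz), ← Finset.Ico_add_one_right_eq_Icc, Finset.sum_Ico_eq_sum_range,
    length_chain, show k + 1 - (j + 1) + 1 = k + 1 - j by omega]
  refine Finset.sum_congr rfl fun i hi => ?_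
  rw [Finset.mem_range] at hi
  rw [Nat.add_sub_cancel_left, take_chain_succ (by omega), drop_chain, ← rchain, mul_assoc,
    add_right_comm]

/-- The linear form `𝒜_j(z) = ∑_{k=j}^m a_k(z) ŝ_{j+1,k}(z)` at a fixed `z`, as a function of the
values `c k = a_k(z)`. The term `k = j` is covered by `listHat [] z = 1`. -/
def chainForm (μ : ℕ → Measure ℝ) (e : ℕ → ℝ) (m j : ℕ) (c : ℕ → ℂ) (z : ℂ) : ℂ :=
  ∑ k ∈ Finset.Icc j m, c k * listHat (chain μ e (j + 1) k) z

lemma linFormL_eq_chainForm (A : ℕ → ℝ[X]) (z : ℂ) :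
    linFormL μ e m j A z = chainForm μ e m j (fun k => aeval z (A k)) z := by
  refine Finset.sum_congr rfl fun k hk => ?_
  obtain rfl | hjk := (Finset.mem_Icc.mp hk).1.eq_or_lt
  · simp [chain_succ_self, listHat]
  · rw [if_pos hjk]

theorem polynomial_from_forms_general (hjm : j ≤ m)
    (hfin : ∀ t, j < t → t ≤ m → IsFiniteMeasure (μ t))
    (hsep : ∀ t, j < t → t < m → Metric.AreSeparated (μ t).support (μ (t + 1)).support)
    (c : ℕ → ℂ) {z : ℂ} (hz : ∀ t, j < t → t ≤ m → z ∉ cpx (μ t).support) :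
    c j = chainForm μ e m j c z + ∑ k ∈ Finset.Icc (j + 1) m,
      (-1) ^ (k - j) * listHat (rchain μ e (j + 1) k) z * chainForm μ e m k c z := by
  have h_inv := sum_Icc_mul_sum_Icc_mul_eq hjm (c := c)
    (u := fun l => (-1) ^ (l - j) * listHat (rchain μ e (j + 1) l) z)
    (w := fun l k => listHat (chain μ e (l + 1) k) z)
    (by simp [rchain_succ_self, chain_succ_self, listHat])
    fun k hjk hkm => sum_listHat_rchain_mul_listHat_chain_eq_zero hjk
      (fun t ht htk => hfin t ht (htk.trans hkm)) (fun t ht htk => hsep t ht (htk.trans_le hkm))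
      (fun t ht htk => hz t ht (htk.trans hkm))
  rw [← h_inv, ← Finset.add_sum_Ioc_eq_sum_Icc hjm, Finset.Icc_add_one_left_eq_Ioc]
  simp [chainForm, rchain_succ_self, listHat]

end Chain

lemma msupport_eq_support (μ : Measure ℝ) : msupport μ = μ.support := by
  ext x
  simp only [msupport, Measure.support_eq_forall_isOpen, mem_ofPred_eq, pos_iff_ne_zero]
  exact forall_congr' fun U => forall_comm

namespace NikSys

variable {m : ℕ} (S : NikSys m) {t : ℕ}

lemma support_subset_Icc (ht : t ≤ m) : (S.μ t).support ⊆ Icc (S.a t) (S.b t) := by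
  rw [← S.hull t ht, ← msupport_eq_support]
  exact subset_convexHull ℝ _

lemma areSeparated_support (ht : t < m) :
    Metric.AreSeparated (S.μ t).support (S.μ (t + 1)).support :=
  (areSeparated_of_isCompact_of_isClosed isCompact_Icc isClosed_Icc
    (disjoint_iff_inter_eq_empty.mpr (S.disj t ht))).mono
      (S.support_subset_Icc ht.le) (S.support_subset_Icc ht)

end NikSys

/-- Recovery of the polynomials from the linear forms: for any
polynomials `a_0,…,a_{m₁}` and every `z ∉ Δ¹_{j+1} ∪ … ∪ Δ¹_{m₁}`,
`a_j(z) = 𝒜_j(z) + ∑_{k=j+1}^{m₁} (-1)^{k-j} ⟨σ¹_k,…,σ¹_{j+1}⟩^(z) 𝒜_k(z)`. -/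
theorem polynomial_from_forms
    (m₁ : ℕ) (S : NikSys m₁) (A : ℕ → Polynomial ℝ) :
    ∀ j ≤ m₁, ∀ z : ℂ,
      (∀ k, j < k → k ≤ m₁ → z ∉ cpx (Set.Icc (S.a k) (S.b k))) →
      (Polynomial.aeval z (A j) : ℂ) =
        linFormL S.μ S.e m₁ j A z +
        ∑ k ∈ Finset.Icc (j + 1) m₁, (-1 : ℂ) ^ (k - j) *
          listHat (rchain S.μ S.e (j + 1) k) z * linFormL S.μ S.e m₁ k A z := by
  intro j hj z hz
  simpa only [linFormL_eq_chainForm] using polynomial_from_forms_general hj (fun t _ _ => S.fin t)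
    (fun t _ ht => S.areSeparated_support ht) (fun k => aeval z (A k))
    fun t hjt ht hzt => hz t hjt ht (image_mono (S.support_subset_Icc ht) hzt)

end
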